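/- Let μ and ν be Borel probability measures on ℝ with finite first moments (∫ |x| dμ < ∞ and ∫ |x| dν < ∞), let h : ℝ → ℝ be a strictly convex nonnegative function, and suppose ∫_{(0,1)} h( Q_μ(q) − Q_ν(q) ) dq < ∞. If γ₁ and γ₂ are couplings of μ and ν that both attain the infimum over all couplings γ of ∫⁻_{(x,y)} ENNReal.ofReal( h(x − y) ) dγ, then γ₁ = γ₂. -/

import Mathlib

/-!
Optimality forces the coupling to be comonotone, by exchanging mass on crossing pairs.

For a coupling `γ` and reals `a`, `b`, put `A = (-∞, a] × (b, ∞)` and `B = (a, ∞) × (-∞, b]`.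
If `(x, y) ∈ A` and `(x', y') ∈ B`, then `x - y'` and `x' - y` lie strictly between `x - y` and
`x' - y'` and have the same sum, so strict convexity makes the exchanged pairs `(x, y')`, `(x', y)`
strictly cheaper (`exchange_lt`). If both `A` and `B` had positive `γ`-mass, the part
`γ(B) • γ|_A + γ(A) • γ|_B` of `γ`, which is the sum of the two marginals of `γ|_A ⊗ γ|_B`, could be
replaced by the law of the exchanged pairs, giving a coupling of strictly smaller cost
(`exists_cheaper_coupling`). This uses that the cost of `γ` is finite, which holds for a minimizer
since the quantile coupling has finite cost by hypothesis (`map_quantileFn`).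

Hence an optimal `γ` gives mass zero to `A` or to `B`, so that
`γ((-∞, a] × (-∞, b])` equals `min (F_μ a) (F_ν b)` for all `a`, `b`. These rectangles are a
generating π-system, so `γ` is determined.
-/


open MeasureTheory Set

/-- The cumulative distribution function of a Borel measure on ℝ:
`F_μ(x) = μ((-∞, x])`. -/
noncomputable def cdfFn (μ : Measure ℝ) (x : ℝ) : ℝ := (μ (Iic x)).toReal

/-- The quantile function (generalized inverse of the CDF):
`Q_μ(p) = sInf { x | p ≤ F_μ(x) }`. -/
noncomputable def quantileFn (μ : Measure ℝ) (p : ℝ) : ℝ := sInf { x : ℝ | p ≤ cdfFn μ x }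

open Filter Topology ProbabilityTheory
open scoped ENNReal

lemma cdfFn_eq_cdf (μ : Measure ℝ) [IsProbabilityMeasure μ] (x : ℝ) : cdfFn μ x = cdf μ x :=
  (cdf_eq_real μ x).symm

/-- The Galois connection between the quantile function and the CDF; it needs `p ∈ (0, 1)`, where
the set in the definition of `quantileFn` is nonempty and bounded below. -/
lemma quantileFn_le_iff (μ : Measure ℝ) [IsProbabilityMeasure μ] {p : ℝ} (hp : p ∈ Ioo (0 : ℝ) 1)
    (x : ℝ) : quantileFn μ p ≤ x ↔ p ≤ cdfFn μ x := by
  unfold quantileFn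
  simp only [cdfFn_eq_cdf]
  have hne : {x : ℝ | p ≤ cdf μ x}.Nonempty := by
    obtain ⟨z, hz⟩ := ((tendsto_cdf_atTop μ).eventually (lt_mem_nhds hp.2)).exists
    exact ⟨z, hz.le⟩
  have hbdd : BddBelow {x : ℝ | p ≤ cdf μ x} := by
    obtain ⟨z, hz⟩ := ((tendsto_cdf_atBot μ).eventually (gt_mem_nhds hp.1)).exists
    refine ⟨z, fun y hy => ?_⟩
    by_contra! hlt
    exact absurd ((hy.trans (monotone_cdf μ hlt.le)).trans_lt hz) (lt_irrefl _)
  refine ⟨fun hx => ?_, fun hx => csInf_le hbdd hx⟩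
  refine le_trans ?_ (monotone_cdf μ hx)
  rw [← (cdf μ).iInf_Ioi_eq]
  have : Nonempty (Ioi (sInf {x : ℝ | p ≤ cdf μ x})) := nonempty_Ioi_subtype
  refine le_ciInf fun y => ?_
  obtain ⟨s, hs, hsy⟩ := exists_lt_of_csInf_lt hne y.2
  exact hs.trans (monotone_cdf μ hsy.le)

lemma aemeasurable_quantileFn (μ : Measure ℝ) [IsProbabilityMeasure μ] :
    AEMeasurable (quantileFn μ) (volume.restrict (Ioo (0 : ℝ) 1)) := by
  refine aemeasurable_restrict_of_monotoneOn measurableSet_Ioo fun p hp q hq hpq => ?_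
  rw [quantileFn_le_iff μ hp]
  exact hpq.trans ((quantileFn_le_iff μ hq _).1 le_rfl)

instance isProbabilityMeasure_volume_Ioo :
    IsProbabilityMeasure (volume.restrict (Ioo (0 : ℝ) 1)) :=
  ⟨by simp⟩

/-- Inverse transform sampling: the quantile function pushes the uniform law on `(0, 1)`
forward to `μ`. -/
lemma map_quantileFn (μ : Measure ℝ) [IsProbabilityMeasure μ] :
    (volume.restrict (Ioo (0 : ℝ) 1)).map (quantileFn μ) = μ := by
  have hm := aemeasurable_quantileFn μ
  have := Measure.isProbabilityMeasure_map hm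
  refine Measure.ext_of_Iic _ _ fun x => ?_
  rw [Measure.map_apply_of_aemeasurable hm measurableSet_Iic,
    Measure.restrict_apply' measurableSet_Ioo]
  have hset : quantileFn μ ⁻¹' Iic x ∩ Ioo 0 1 = Iic (cdfFn μ x) ∩ Ioo 0 1 := by
    ext p
    exact and_congr_left fun hp => quantileFn_le_iff μ hp x
  have h1 : cdfFn μ x ≤ 1 := by rw [cdfFn_eq_cdf]; exact cdf_le_one μ x
  have hae : (Iic (cdfFn μ x) ∩ Ioo 0 1 : Set ℝ) =ᵐ[volume] Ioc 0 (cdfFn μ x) := by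
    have : (Iic (cdfFn μ x) ∩ Ioc 0 1 : Set ℝ) = Ioc 0 (cdfFn μ x) := by
      ext p
      simp only [mem_inter_iff, mem_Iic, mem_Ioc]
      exact ⟨fun h => ⟨h.2.1, h.1⟩, fun h => ⟨h.2, h.1, h.2.trans h1⟩⟩
    rw [← this]
    exact (ae_eq_refl _).inter Ioo_ae_eq_Ioc
  rw [hset, measure_congr hae, Real.volume_Ioc, sub_zero, cdfFn,
    ENNReal.ofReal_toReal (measure_ne_top _ _)]

/-- If `u, v` lie strictly between `s` and `t` and `u + v = s + t`, a strictly convex function has a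
strictly smaller sum of values at the inner pair. -/
lemma StrictConvexOn.add_lt_add_of_inner {h : ℝ → ℝ} (hc : StrictConvexOn ℝ univ h)
    {s t u v : ℝ} (hsu : s < u) (hut : u < t) (hsum : u + v = s + t) :
    h u + h v < h s + h t := by
  have hst : 0 < t - s := by linarith
  -- the weights for which `u = l * s + r * t`, and then `v = r * s + l * t`
  obtain ⟨l, r, hl, hr, hlr, hu⟩ :
      ∃ l r : ℝ, 0 < l ∧ 0 < r ∧ l + r = 1 ∧ u = l * s + r * t := by
    refine ⟨(t - u) / (t - s), (u - s) / (t - s), div_pos (by linarith) hst,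
      div_pos (by linarith) hst, ?_, ?_⟩ <;> field_simp <;> ring
  have hv : v = r * s + l * t := by
    linear_combination hsum - hu - (s + t) * hlr
  have hne : s ≠ t := (hsu.trans hut).ne
  have e1 := hc.2 (mem_univ s) (mem_univ t) hne hl hr hlr
  have e2 := hc.2 (mem_univ s) (mem_univ t) hne hr hl (by linarith)
  simp only [smul_eq_mul] at e1 e2
  rw [← hu] at e1
  rw [← hv] at e2
  have : l * h s + r * h t + (r * h s + l * h t) = h s + h t := by
    linear_combination (h s + h t) * hlr
  linarith

/-- Uncrossing a pair of transport edges strictly lowers the cost. -/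
lemma exchange_lt {h : ℝ → ℝ} (hc : StrictConvexOn ℝ univ h) (h0 : ∀ x, 0 ≤ h x)
    {x y x' y' : ℝ} (hx : x < x') (hy : y' < y) :
    ENNReal.ofReal (h (x - y')) + ENNReal.ofReal (h (x' - y)) <
      ENNReal.ofReal (h (x - y)) + ENNReal.ofReal (h (x' - y')) := by
  have hlt : h (x - y') + h (x' - y) < h (x - y) + h (x' - y') :=
    hc.add_lt_add_of_inner (by linarith) (by linarith) (by ring)
  rw [← ENNReal.ofReal_add (h0 _) (h0 _), ← ENNReal.ofReal_add (h0 _) (h0 _)]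
  exact (ENNReal.ofReal_lt_ofReal_iff_of_nonneg (add_nonneg (h0 _) (h0 _))).2 hlt

/-- If `γ` has finite cost and charges both off-diagonal quadrants at `(a, b)`, then exchanging
the second coordinates of independent samples from these quadrants produces a measure with the
same marginals and a strictly smaller cost. -/
lemma exists_cheaper_coupling {h : ℝ → ℝ} (hc : StrictConvexOn ℝ univ h) (h0 : ∀ x, 0 ≤ h x)
    (γ : Measure (ℝ × ℝ)) [IsProbabilityMeasure γ]
    (hfin : ∫⁻ p, ENNReal.ofReal (h (p.1 - p.2)) ∂γ ≠ ∞) (a b : ℝ)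
    (hA : γ (Iic a ×ˢ Ioi b) ≠ 0) (hB : γ (Ioi a ×ˢ Iic b) ≠ 0) :
    ∃ γ' : Measure (ℝ × ℝ), γ'.map Prod.fst = γ.map Prod.fst ∧
      γ'.map Prod.snd = γ.map Prod.snd ∧
      ∫⁻ p, ENNReal.ofReal (h (p.1 - p.2)) ∂γ' < ∫⁻ p, ENNReal.ofReal (h (p.1 - p.2)) ∂γ := by
  have hmeas : Measurable fun p : ℝ × ℝ => ENNReal.ofReal (h (p.1 - p.2)) := by
    have : Continuous h := continuousOn_univ.1 (hc.convexOn.continuousOn isOpen_univ)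
    exact (this.measurable.comp (measurable_fst.sub measurable_snd)).ennreal_ofReal
  set c : ℝ × ℝ → ℝ≥0∞ := fun p => ENNReal.ofReal (h (p.1 - p.2)) with hcdef
  set A : Set (ℝ × ℝ) := Iic a ×ˢ Ioi b with hAdef
  set B : Set (ℝ × ℝ) := Ioi a ×ˢ Iic b with hBdef
  have mA : MeasurableSet A := measurableSet_Iic.prod measurableSet_Ioi
  have mB : MeasurableSet B := measurableSet_Ioi.prod measurableSet_Iic
  have hAB : Disjoint A B := by
    rw [Set.disjoint_left]
    exact fun p hp hq => not_le.2 (mem_Ioi.1 hq.1) (mem_Iic.1 hp.1)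
  set π : Measure ((ℝ × ℝ) × (ℝ × ℝ)) := (γ.restrict A).prod (γ.restrict B) with hπ
  have hπ1 : π.map Prod.fst = γ B • γ.restrict A := by
    rw [hπ, Measure.map_fst_prod, Measure.restrict_apply_univ]
  have hπ2 : π.map Prod.snd = γ A • γ.restrict B := by
    rw [hπ, Measure.map_snd_prod, Measure.restrict_apply_univ]
  -- `ρ` is the part of `γ` that is left in place
  obtain ⟨ρ, hρ⟩ : ∃ ρ : Measure (ℝ × ℝ), γ = ρ + (π.map Prod.fst + π.map Prod.snd) := by
    refine ⟨γ.restrict (A ∪ B)ᶜ + ((1 - γ B) • γ.restrict A + (1 - γ A) • γ.restrict B), ?_⟩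
    have e1 : γ.restrict A = (1 - γ B) • γ.restrict A + γ B • γ.restrict A := by
      rw [← add_smul, tsub_add_cancel_of_le prob_le_one, one_smul]
    have e2 : γ.restrict B = (1 - γ A) • γ.restrict B + γ A • γ.restrict B := by
      rw [← add_smul, tsub_add_cancel_of_le prob_le_one, one_smul]
    calc γ = γ.restrict (A ∪ B)ᶜ + (γ.restrict A + γ.restrict B) := by
          rw [← Measure.restrict_union hAB mB, add_comm,
            Measure.restrict_add_restrict_compl (mA.union mB)]
      _ = γ.restrict (A ∪ B)ᶜ + (((1 - γ B) • γ.restrict A + γ B • γ.restrict A) +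
            ((1 - γ A) • γ.restrict B + γ A • γ.restrict B)) := by rw [← e1, ← e2]
      _ = _ := by rw [hπ1, hπ2]; abel
  have m12 : Measurable fun z : (ℝ × ℝ) × (ℝ × ℝ) => (z.1.1, z.2.2) := by fun_prop
  have m21 : Measurable fun z : (ℝ × ℝ) × (ℝ × ℝ) => (z.2.1, z.1.2) := by fun_prop
  refine ⟨ρ + (π.map (fun z => (z.1.1, z.2.2)) + π.map (fun z => (z.2.1, z.1.2))), ?_, ?_, ?_⟩
  · conv_rhs => rw [hρ]
    simp only [Measure.map_add _ _ measurable_fst]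
    rw [Measure.map_map measurable_fst m12, Measure.map_map measurable_fst m21,
      Measure.map_map measurable_fst measurable_fst, Measure.map_map measurable_fst measurable_snd]
    rfl
  · conv_rhs => rw [hρ]
    simp only [Measure.map_add _ _ measurable_snd]
    rw [Measure.map_map measurable_snd m12, Measure.map_map measurable_snd m21,
      Measure.map_map measurable_snd measurable_fst, Measure.map_map measurable_snd measurable_snd,
      add_comm (π.map _)]
    rfl
  · have hcost : ∫⁻ p, c p ∂γ = ∫⁻ p, c p ∂ρ + ∫⁻ z, c z.1 + c z.2 ∂π := by
      conv_lhs => rw [hρ]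
      rw [lintegral_add_measure, lintegral_add_measure, lintegral_map hmeas measurable_fst,
        lintegral_map hmeas measurable_snd]
      exact congrArg _ (lintegral_add_left (hmeas.comp measurable_fst) _).symm
    have hcost' : ∫⁻ p, c p ∂(ρ + (π.map (fun z => (z.1.1, z.2.2)) +
        π.map (fun z => (z.2.1, z.1.2)))) =
        ∫⁻ p, c p ∂ρ + ∫⁻ z, c (z.1.1, z.2.2) + c (z.2.1, z.1.2) ∂π := by
      rw [lintegral_add_measure, lintegral_add_measure, lintegral_map hmeas m12,
        lintegral_map hmeas m21]
      exact congrArg _ (lintegral_add_left (hmeas.comp m12) _).symm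
    have hlt : ∀ᵐ z ∂π, c (z.1.1, z.2.2) + c (z.2.1, z.1.2) < c z.1 + c z.2 := by
      have hmem : ∀ᵐ z ∂π, z ∈ A ×ˢ B := by
        rw [hπ, Measure.prod_restrict]
        exact ae_restrict_mem (mA.prod mB)
      filter_upwards [hmem] with z hz
      exact exchange_lt hc h0 (lt_of_le_of_lt hz.1.1 hz.2.1) (lt_of_le_of_lt hz.2.2 hz.1.2)
    have hπ0 : π ≠ 0 := by
      intro h
      have : π univ = 0 := by rw [h]; rfl
      rw [hπ, ← univ_prod_univ, Measure.prod_prod, Measure.restrict_apply_univ,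
        Measure.restrict_apply_univ] at this
      exact mul_ne_zero hA hB this
    rw [hcost, ENNReal.add_ne_top] at hfin
    rw [hcost, hcost']
    refine ENNReal.add_lt_add_left hfin.1 (lintegral_strict_mono hπ0 ?_ ?_ hlt)
    · exact ((hmeas.comp measurable_fst).add (hmeas.comp measurable_snd)).aemeasurable
    · refine ne_top_of_le_ne_top hfin.2 (lintegral_mono_ae (hlt.mono fun z hz => hz.le))

/-- A coupling that does not charge both off-diagonal quadrants at `(a, b)` has the largest
possible mass on the lower left quadrant. -/
lemma coupling_Iic_prod_Iic {μ ν : Measure ℝ} {γ : Measure (ℝ × ℝ)}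
    (hf : γ.map Prod.fst = μ) (hs : γ.map Prod.snd = ν) (a b : ℝ)
    (h : γ (Iic a ×ˢ Ioi b) = 0 ∨ γ (Ioi a ×ˢ Iic b) = 0) :
    γ (Iic a ×ˢ Iic b) = min (μ (Iic a)) (ν (Iic b)) := by
  have e1 : μ (Iic a) = γ (Iic a ×ˢ univ) := by
    rw [← hf, Measure.map_apply measurable_fst measurableSet_Iic, prod_univ]
  have e2 : ν (Iic b) = γ (univ ×ˢ Iic b) := by
    rw [← hs, Measure.map_apply measurable_snd measurableSet_Iic, univ_prod]
  rw [e1, e2]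
  refine le_antisymm (le_min (measure_mono (by gcongr; exact subset_univ _))
    (measure_mono (by gcongr; exact subset_univ _))) ?_
  rcases h with h | h
  · refine (min_le_left _ _).trans ?_
    rw [← Iic_union_Ioi (a := b), prod_union]
    exact (measure_union_le _ _).trans (by rw [h, add_zero])
  · refine (min_le_right _ _).trans ?_
    rw [← Iic_union_Ioi (a := a), union_prod]
    exact (measure_union_le _ _).trans (by rw [h, add_zero])

theorem strictly_convex_cost_optimal_coupling_unique
    (μ ν : Measure ℝ) [IsProbabilityMeasure μ] [IsProbabilityMeasure ν]
    (hμ1 : Integrable (fun x : ℝ => |x|) μ) (hν1 : Integrable (fun x : ℝ => |x|) ν)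
    (h : ℝ → ℝ) (hconv : StrictConvexOn ℝ Set.univ h) (hnonneg : ∀ x, 0 ≤ h x)
    (hfin : (∫⁻ q in Ioo (0:ℝ) 1,
        ENNReal.ofReal (h (quantileFn μ q - quantileFn ν q))) < ⊤)
    (γ₁ γ₂ : Measure (ℝ × ℝ))
    (h₁p : IsProbabilityMeasure γ₁) (h₁f : γ₁.map Prod.fst = μ) (h₁s : γ₁.map Prod.snd = ν)
    (h₂p : IsProbabilityMeasure γ₂) (h₂f : γ₂.map Prod.fst = μ) (h₂s : γ₂.map Prod.snd = ν)
    (hmin₁ : (∫⁻ p, ENNReal.ofReal (h (p.1 - p.2)) ∂γ₁) =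
      ⨅ γ : { γ : Measure (ℝ × ℝ) // IsProbabilityMeasure γ ∧
          γ.map Prod.fst = μ ∧ γ.map Prod.snd = ν },
        ∫⁻ p, ENNReal.ofReal (h (p.1 - p.2)) ∂γ.1)
    (hmin₂ : (∫⁻ p, ENNReal.ofReal (h (p.1 - p.2)) ∂γ₂) =
      ⨅ γ : { γ : Measure (ℝ × ℝ) // IsProbabilityMeasure γ ∧
          γ.map Prod.fst = μ ∧ γ.map Prod.snd = ν },
        ∫⁻ p, ENNReal.ofReal (h (p.1 - p.2)) ∂γ.1) :
    γ₁ = γ₂ := by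
  have hm : AEMeasurable (fun q => (quantileFn μ q, quantileFn ν q))
      (volume.restrict (Ioo (0 : ℝ) 1)) :=
    (aemeasurable_quantileFn μ).prodMk (aemeasurable_quantileFn ν)
  have hmeas : Measurable fun p : ℝ × ℝ => ENNReal.ofReal (h (p.1 - p.2)) := by
    have : Continuous h := continuousOn_univ.1 (hconv.convexOn.continuousOn isOpen_univ)
    exact (this.measurable.comp (measurable_fst.sub measurable_snd)).ennreal_ofReal
  have hinf : (⨅ γ : { γ : Measure (ℝ × ℝ) // IsProbabilityMeasure γ ∧
      γ.map Prod.fst = μ ∧ γ.map Prod.snd = ν },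
        ∫⁻ p, ENNReal.ofReal (h (p.1 - p.2)) ∂γ.1) ≠ ∞ := by
    refine ne_top_of_le_ne_top ?_ (iInf_le _
      ⟨(volume.restrict (Ioo (0 : ℝ) 1)).map (fun q => (quantileFn μ q, quantileFn ν q)),
        Measure.isProbabilityMeasure_map hm, ?_, ?_⟩)
    · rw [lintegral_map' hmeas.aemeasurable hm]
      exact hfin.ne
    · rw [AEMeasurable.map_map_of_aemeasurable measurable_fst.aemeasurable hm]
      exact map_quantileFn μ
    · rw [AEMeasurable.map_map_of_aemeasurable measurable_snd.aemeasurable hm]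
      exact map_quantileFn ν
  have key : ∀ γ : Measure (ℝ × ℝ), IsProbabilityMeasure γ → γ.map Prod.fst = μ →
      γ.map Prod.snd = ν → (∫⁻ p, ENNReal.ofReal (h (p.1 - p.2)) ∂γ) =
        (⨅ γ : { γ : Measure (ℝ × ℝ) // IsProbabilityMeasure γ ∧
          γ.map Prod.fst = μ ∧ γ.map Prod.snd = ν },
        ∫⁻ p, ENNReal.ofReal (h (p.1 - p.2)) ∂γ.1) →
      ∀ a b : ℝ, γ (Iic a ×ˢ Iic b) = min (μ (Iic a)) (ν (Iic b)) := by
    intro γ hγ hf hs hmin a b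
    refine coupling_Iic_prod_Iic hf hs a b ?_
    by_contra! hne
    obtain ⟨γ', hf', hs', hlt⟩ :=
      exists_cheaper_coupling hconv hnonneg γ (hmin ▸ hinf) a b hne.1 hne.2
    rw [hf] at hf'
    rw [hs] at hs'
    have hγ' : IsProbabilityMeasure γ' := by
      constructor
      have : γ'.map Prod.fst univ = 1 := by rw [hf']; exact measure_univ
      rwa [Measure.map_apply measurable_fst MeasurableSet.univ, preimage_univ] at this
    rw [hmin] at hlt
    refine hlt.not_ge ?_
    exact iInf_le_of_le ⟨γ', hγ', hf', hs'⟩ le_rfl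
  have hspan : IsCountablySpanning (range (Iic : ℝ → Set ℝ)) :=
    ⟨fun n : ℕ => Iic (n : ℝ), fun n => mem_range_self _, by
      refine eq_univ_of_forall fun x => ?_
      obtain ⟨n, hn⟩ := exists_nat_ge x
      exact mem_iUnion.2 ⟨n, hn⟩⟩
  have hgen : (Prod.instMeasurableSpace : MeasurableSpace (ℝ × ℝ)) =
      MeasurableSpace.generateFrom (image2 (· ×ˢ ·) (range Iic) (range Iic)) :=
    (generateFrom_eq_prod (borel_eq_generateFrom_Iic ℝ ▸ (BorelSpace.measurable_eq).symm)
      (borel_eq_generateFrom_Iic ℝ ▸ (BorelSpace.measurable_eq).symm) hspan hspan).symm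
  refine ext_of_generate_finite _ hgen (isPiSystem_Iic.prod isPiSystem_Iic) ?_ (by simp)
  rintro _ ⟨_, ⟨a, rfl⟩, _, ⟨b, rfl⟩, rfl⟩
  exact (key γ₁ h₁p h₁f h₁s hmin₁ a b).trans (key γ₂ h₂p h₂f h₂s hmin₂ a b).symm
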